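/- arXiv:math/0402257 — 2 statements merged into one kernel-verified Lean document; each statement's English description precedes it below -/
import Mathlib

section
/- Let n ≥ 2 and let g(x) = Rx + τ be an affine map of ℝⁿ, where R is a linear map preserving ⟨·|·⟩ which fixes some timelike vector, and Rτ = τ. Then: (i) if |τ|² < 0 then Ω_g = ∅; (ii) if |τ|² > 0 then Ω_g = ℝⁿ; (iii) if |τ|² = 0 then the complement of Ω_g is exactly the set of R-periodic points, i.e. ℝⁿ ∖ Ω_g = {x ∈ ℝⁿ : Rᵠx = x for some nonzero integer q}. -/
/-!
Since `R` fixes `τ`, `gᵠ x = Rᵠ x + q τ` (`zpow_apply_of_affine`), and `w = Rᵠ x - x` is orthogonal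
to every fixed vector of `R`, in particular to `τ` and to the fixed timelike vector `u`. Hence
`|gᵠ x - x|² = |w|² + q² |τ|²`. The form is positive definite on the orthogonal complement of a
timelike vector (`mink_nonneg_of_orthogonal`, `eq_zero_of_orthogonal`), which settles the spacelike
and lightlike cases at once. For timelike `τ` it remains to see that `|w|²` is bounded in `q`: with
`y` the component of `x` orthogonal to `u`, the parallelogram identity gives
`|w|² = |Rᵠ y - y|² ≤ 4 |y|²`, which `q² |τ|²` outweighs for large `q`.
-/

open Set

noncomputable section

/-- The Minkowski bilinear form `⟨x|y⟩ = -x₀y₀ + x₁y₁ + … + x_{n-1}y_{n-1}` on `ℝⁿ`. -/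
def mink {n : ℕ} (x y : Fin n → ℝ) : ℝ :=
  ∑ i : Fin n, (if (i : ℕ) = 0 then (-1 : ℝ) else 1) * x i * y i

/-- The achronal domain of an affine bijection `g` of `ℝⁿ`:
points `x` with `|gᵠ(x) − x|² > 0` for every nonzero integer `q`. -/
def achronalDom {n : ℕ} (g : (Fin n → ℝ) ≃ᵃ[ℝ] (Fin n → ℝ)) : Set (Fin n → ℝ) :=
  {x | ∀ q : ℤ, q ≠ 0 → 0 < mink ((g ^ q) x - x) ((g ^ q) x - x)}

theorem mink_comm {n : ℕ} (x y : Fin n → ℝ) : mink x y = mink y x :=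
  Finset.sum_congr rfl fun i _ => by ring

theorem mink_add_left {n : ℕ} (x y z : Fin n → ℝ) : mink (x + y) z = mink x z + mink y z := by
  simp only [mink, ← Finset.sum_add_distrib, Pi.add_apply]
  exact Finset.sum_congr rfl fun i _ => by ring

theorem mink_smul_left {n : ℕ} (c : ℝ) (x z : Fin n → ℝ) : mink (c • x) z = c * mink x z := by
  simp only [mink, Finset.mul_sum, Pi.smul_apply, smul_eq_mul]
  exact Finset.sum_congr rfl fun i _ => by ring

theorem mink_sub_left {n : ℕ} (x y z : Fin n → ℝ) : mink (x - y) z = mink x z - mink y z := by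
  simp only [mink, ← Finset.sum_sub_distrib, Pi.sub_apply]
  exact Finset.sum_congr rfl fun i _ => by ring

theorem mink_add_right {n : ℕ} (x y z : Fin n → ℝ) : mink z (x + y) = mink z x + mink z y := by
  rw [mink_comm, mink_add_left, mink_comm x, mink_comm y]

theorem mink_smul_right {n : ℕ} (c : ℝ) (x z : Fin n → ℝ) : mink z (c • x) = c * mink z x := by
  rw [mink_comm, mink_smul_left, mink_comm x]

theorem mink_sub_right {n : ℕ} (x y z : Fin n → ℝ) : mink z (x - y) = mink z x - mink z y := by
  rw [mink_comm, mink_sub_left, mink_comm x, mink_comm y]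

theorem mink_succ {m : ℕ} (x y : Fin (m + 1) → ℝ) :
    mink x y = -(x 0 * y 0) + ∑ i : Fin m, x i.succ * y i.succ := by
  simp [mink, Fin.sum_univ_succ]

/-- The form is nonnegative on the orthogonal complement of a timelike vector, by the
Cauchy–Schwarz inequality for the spatial coordinates. -/
theorem mink_nonneg_of_orthogonal {n : ℕ} {u w : Fin n → ℝ} (hu : mink u u < 0)
    (hw : mink w u = 0) : 0 ≤ mink w w := by
  cases n with
  | zero => simp [mink]
  | succ m =>
    rw [mink_succ] at *
    have hcs := Finset.sum_mul_sq_le_sq_mul_sq Finset.univ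
      (fun i : Fin m => w i.succ) (fun i : Fin m => u i.succ)
    simp only [pow_two (w (Fin.succ _)), pow_two (u (Fin.succ _))] at hcs
    have hU : 0 ≤ ∑ i : Fin m, u i.succ * u i.succ :=
      Finset.sum_nonneg fun i _ => mul_self_nonneg _
    have hW : 0 ≤ ∑ i : Fin m, w i.succ * w i.succ :=
      Finset.sum_nonneg fun i _ => mul_self_nonneg _
    generalize (∑ i : Fin m, u i.succ * u i.succ) = U at *
    generalize (∑ i : Fin m, w i.succ * w i.succ) = W at *
    have hS : (∑ i : Fin m, w i.succ * u i.succ) = w 0 * u 0 := by linarith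
    rw [hS] at hcs
    by_contra! h
    have hpos : 0 < w 0 * w 0 := by linarith
    have h1 : W * U ≤ w 0 * w 0 * U := mul_le_mul_of_nonneg_right (by linarith) hU
    have h2 : w 0 * w 0 * U < w 0 * w 0 * (u 0 * u 0) := mul_lt_mul_of_pos_left (by linarith) hpos
    nlinarith

theorem eq_zero_of_orthogonal {n : ℕ} {u w : Fin n → ℝ} (hu : mink u u < 0)
    (hw : mink w u = 0) (h : mink w w = 0) : w = 0 := by
  cases n with
  | zero => exact Subsingleton.elim _ _
  | succ m =>
    rw [mink_succ] at *
    have hcs := Finset.sum_mul_sq_le_sq_mul_sq Finset.univ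
      (fun i : Fin m => w i.succ) (fun i : Fin m => u i.succ)
    simp only [pow_two (w (Fin.succ _)), pow_two (u (Fin.succ _))] at hcs
    have hS : (∑ i : Fin m, w i.succ * u i.succ) = w 0 * u 0 := by linarith
    have hW : (∑ i : Fin m, w i.succ * w i.succ) = w 0 * w 0 := by linarith
    rw [hS, hW] at hcs
    have h0 : w 0 * w 0 = 0 := by
      by_contra hne
      have hpos : 0 < w 0 * w 0 := lt_of_le_of_ne (mul_self_nonneg _) (Ne.symm hne)
      nlinarith [mul_pos hpos (neg_pos.2 hu)]
    rw [h0, Finset.sum_eq_zero_iff_of_nonneg fun i _ => mul_self_nonneg _] at hW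
    funext i
    refine Fin.cases (mul_self_eq_zero.1 h0) (fun j => ?_) i
    exact mul_self_eq_zero.1 (hW j (Finset.mem_univ _))

theorem zpow_fixed {n : ℕ} {R : (Fin n → ℝ) ≃ₗ[ℝ] (Fin n → ℝ)} {v : Fin n → ℝ}
    (hv : R v = v) (q : ℤ) : (R ^ q) v = v := by
  induction q using Int.induction_on with
  | zero => simp
  | succ k ih => rw [zpow_add_one, LinearEquiv.mul_apply, hv, ih]
  | pred k ih =>
    have : (R ^ (-(k : ℤ) - 1)) (R v) = v := by
      rw [← LinearEquiv.mul_apply, ← zpow_add_one, sub_add_cancel, ih]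
    rwa [hv] at this

theorem mink_zpow {n : ℕ} {R : (Fin n → ℝ) ≃ₗ[ℝ] (Fin n → ℝ)}
    (hR : ∀ x y : Fin n → ℝ, mink (R x) (R y) = mink x y) (q : ℤ) (x y : Fin n → ℝ) :
    mink ((R ^ q) x) ((R ^ q) y) = mink x y := by
  induction q using Int.induction_on generalizing x y with
  | zero => simp
  | succ k ih => rw [zpow_add_one, LinearEquiv.mul_apply, LinearEquiv.mul_apply, ih, hR]
  | pred k ih =>
    obtain ⟨x, rfl⟩ := R.surjective x
    obtain ⟨y, rfl⟩ := R.surjective y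
    rw [← LinearEquiv.mul_apply, ← LinearEquiv.mul_apply, ← zpow_add_one, sub_add_cancel, ih, hR]

theorem zpow_apply_of_affine {n : ℕ} {R : (Fin n → ℝ) ≃ₗ[ℝ] (Fin n → ℝ)} {τ : Fin n → ℝ}
    (hτ : R τ = τ) {g : (Fin n → ℝ) ≃ᵃ[ℝ] (Fin n → ℝ)} (hg : ∀ x : Fin n → ℝ, g x = R x + τ)
    (q : ℤ) (x : Fin n → ℝ) : (g ^ q) x = (R ^ q) x + (q : ℝ) • τ := by
  induction q using Int.induction_on generalizing x with
  | zero => simp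
  | succ k ih =>
    have : (g ^ ((k : ℤ) + 1)) x = (g ^ (k : ℤ)) (g x) := by rw [zpow_add_one]; rfl
    rw [this, ih, hg, map_add, zpow_fixed hτ, zpow_add_one, LinearEquiv.mul_apply]
    push_cast
    module
  | pred k ih =>
    obtain ⟨y, rfl⟩ := g.surjective x
    have h1 : (g ^ (-(k : ℤ) - 1)) (g y) = (g ^ (-(k : ℤ))) y := by
      conv_rhs => rw [← sub_add_cancel (-(k : ℤ)) 1, zpow_add_one]
      rfl
    rw [h1, ih, hg, map_add, zpow_fixed hτ, ← LinearEquiv.mul_apply, ← zpow_add_one,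
      sub_add_cancel]
    push_cast
    module

/-- Displacements of an isometry are orthogonal to its fixed vectors. -/
theorem displacement_orthogonal {n : ℕ} {R : (Fin n → ℝ) ≃ₗ[ℝ] (Fin n → ℝ)}
    (hR : ∀ x y : Fin n → ℝ, mink (R x) (R y) = mink x y) {v : Fin n → ℝ} (hv : R v = v)
    (q : ℤ) (x : Fin n → ℝ) : mink ((R ^ q) x - x) v = 0 := by
  have h := mink_zpow hR q x v
  rw [zpow_fixed hv] at h
  rw [mink_sub_left, h, sub_self]

/-- The orbit of `x` under an isometry fixing a timelike vector has bounded displacement. -/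
theorem displacement_bounded {n : ℕ} {R : (Fin n → ℝ) ≃ₗ[ℝ] (Fin n → ℝ)}
    (hR : ∀ x y : Fin n → ℝ, mink (R x) (R y) = mink x y) {u : Fin n → ℝ} (hu : mink u u < 0)
    (hRu : R u = u) (x : Fin n → ℝ) :
    ∃ C : ℝ, ∀ q : ℤ, mink ((R ^ q) x - x) ((R ^ q) x - x) ≤ C := by
  obtain ⟨a, y, hxy, hy⟩ : ∃ (a : ℝ) (y : Fin n → ℝ), x = a • u + y ∧ mink y u = 0 := by
    refine ⟨mink x u / mink u u, x - (mink x u / mink u u) • u, by abel, ?_⟩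
    rw [mink_sub_left, mink_smul_left, div_mul_cancel₀ _ hu.ne, sub_self]
  refine ⟨4 * mink y y, fun q => ?_⟩
  have hd : (R ^ q) x - x = (R ^ q) y - y := by
    rw [hxy, map_add, map_smul, zpow_fixed hRu]
    abel
  have hyq : mink ((R ^ q) y + y) u = 0 := by
    have h := mink_zpow hR q y u
    rw [zpow_fixed hRu] at h
    rw [mink_add_left, h, hy, add_zero]
  have hnn := mink_nonneg_of_orthogonal hu hyq
  have hyy := mink_zpow hR q y y
  rw [hd]
  simp only [mink_sub_left, mink_sub_right, mink_add_left, mink_add_right, hyy] at hnn ⊢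
  linarith

/-- the achronal domain of an elliptic isometry `g(x) = Rx + τ`
(`R` preserving the form and fixing a timelike vector, `Rτ = τ`):
it is empty if `τ` is timelike, everything if `τ` is spacelike, and if `τ` is lightlike
its complement is the set of `R`-periodic points. -/
theorem stmt8 {n : ℕ} (hn : 2 ≤ n)
    (R : (Fin n → ℝ) ≃ₗ[ℝ] (Fin n → ℝ))
    (hR : ∀ x y : Fin n → ℝ, mink (R x) (R y) = mink x y)
    (hfix : ∃ u : Fin n → ℝ, mink u u < 0 ∧ R u = u)
    (τ : Fin n → ℝ) (hτ : R τ = τ)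
    (g : (Fin n → ℝ) ≃ᵃ[ℝ] (Fin n → ℝ))
    (hg : ∀ x : Fin n → ℝ, g x = R x + τ) :
    (mink τ τ < 0 → achronalDom g = ∅) ∧
    (0 < mink τ τ → achronalDom g = univ) ∧
    (mink τ τ = 0 →
      (achronalDom g)ᶜ = {x : Fin n → ℝ | ∃ q : ℤ, q ≠ 0 ∧ (R ^ q) x = x}) := by
  obtain ⟨u, hu, hRu⟩ := hfix
  have key : ∀ (q : ℤ) (x : Fin n → ℝ), mink ((g ^ q) x - x) ((g ^ q) x - x) =
      mink ((R ^ q) x - x) ((R ^ q) x - x) + (q : ℝ) ^ 2 * mink τ τ := by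
    intro q x
    have h0 := displacement_orthogonal hR hτ q x
    have h0' := h0
    rw [mink_comm] at h0'
    rw [zpow_apply_of_affine hτ hg, add_sub_right_comm, mink_add_left, mink_add_right,
      mink_add_right, mink_smul_left, mink_smul_right, mink_smul_left, mink_smul_right, h0, h0']
    ring
  have hnn : ∀ (q : ℤ) (x : Fin n → ℝ), 0 ≤ mink ((R ^ q) x - x) ((R ^ q) x - x) := fun q x =>
    mink_nonneg_of_orthogonal hu (displacement_orthogonal hR hRu q x)
  refine ⟨fun ht => ?_, fun ht => ?_, fun ht => ?_⟩
  · rw [eq_empty_iff_forall_notMem]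
    intro x hx
    obtain ⟨C, hC⟩ := displacement_bounded hR hu hRu x
    obtain ⟨N, hN⟩ := exists_nat_gt (C / -mink τ τ)
    have h := hx ((N : ℤ) + 1) (by omega)
    rw [key] at h
    push_cast at h
    rw [div_lt_iff₀ (neg_pos.2 ht)] at hN
    have hN0 : (0 : ℝ) ≤ N := N.cast_nonneg
    have hNsq : (N : ℝ) * -mink τ τ ≤ ((N : ℝ) + 1) ^ 2 * -mink τ τ :=
      mul_le_mul_of_nonneg_right (by nlinarith) (neg_pos.2 ht).le
    linarith [hC ((N : ℤ) + 1)]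
  · rw [eq_univ_iff_forall]
    intro x q hq
    rw [key]
    have hq' : (q : ℝ) ≠ 0 := Int.cast_ne_zero.2 hq
    have := hnn q x
    positivity
  · ext x
    simp only [achronalDom, mem_compl_iff, mem_ofPred_eq, key, ht, mul_zero, add_zero]
    push Not
    refine exists_congr fun q => and_congr_right fun _ => ⟨fun h => ?_, fun h => ?_⟩
    · exact sub_eq_zero.1 (eq_zero_of_orthogonal hu (displacement_orthogonal hR hRu q x)
        (le_antisymm h (hnn q x)))
    · rw [h, sub_self]
      simp [mink]
end
end

section
/- Let n ≥ 3 and let g(x) = R((id + p)x) + τ be an affine map of ℝⁿ, where: p is a nonzero nilpotent linear map of ℝⁿ such that id + p preserves ⟨·|·⟩; R is a linear map preserving ⟨·|·⟩ which fixes some timelike vector; R∘p = p∘R = p; Rτ = τ; and p²(τ) ≠ 0 (the transverse case). Then the achronal domain Ω_g is empty. -/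
/-!
Write `L = id + p`. Isotropic subspaces of Minkowski space are at most one-dimensional
(`mink_orthogonal`), and the images of high powers of `p` are isotropic because `L` is an
isometry; this forces `p³ = 0` (`cube_eq_zero`).

Put `A = p x + τ`. Since `R` fixes `τ` and the image of `p`, one finds for `q ≥ 0`
`g^q x - x = (R^q x - x) + (q A + (q choose 2) p A + (q choose 3) p² A)`,
and the two summands are orthogonal. The first has bounded square, because `R` fixes a timelike
vector (`mink_sub_bound`). Using `p³ = 0` and the invariance of the form, the second has square
`q² (|A|² - (q² - 1) |p A|² / 12)` (`mink_orbit_part`). Transversality says `p (p A) = p² τ ≠ 0`;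
this vector is lightlike and orthogonal to `p A` without being proportional to it, so
`|p A|² > 0`. Hence `|g^q x - x|² < 0` for large `q`, whatever `x` is.
-/

open Set

noncomputable section

theorem mink_zero_left {n : ℕ} (z : Fin n → ℝ) : mink 0 z = 0 := by
  simp [mink]

theorem mink_zero_right {n : ℕ} (z : Fin n → ℝ) : mink z 0 = 0 := by
  simp [mink]

/-- The form is positive definite on the hyperplane `x₀ = 0`. -/
theorem mink_spatial {n : ℕ} (hn : 0 < n) (z : Fin n → ℝ) (h0 : z ⟨0, hn⟩ = 0) :
    0 ≤ mink z z ∧ (mink z z = 0 → z = 0) := by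
  have h : mink z z = ∑ i, z i ^ 2 := by
    unfold mink
    refine Finset.sum_congr rfl fun i _ => ?_
    by_cases hi : (i : ℕ) = 0
    · have : i = ⟨0, hn⟩ := Fin.ext hi
      subst this
      simp [h0]
    · simp only [hi, if_false]
      ring
  rw [h]
  refine ⟨Finset.sum_nonneg fun i _ => sq_nonneg _, fun hz => ?_⟩
  rw [Finset.sum_eq_zero_iff_of_nonneg fun i _ => sq_nonneg _] at hz
  funext i
  simpa using hz i (Finset.mem_univ i)

/-- The orthogonal of a nonzero timelike or lightlike vector `w` is positive semidefinite, with
kernel contained in the line spanned by `w`. -/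
theorem mink_orthogonal {n : ℕ} (hn : 0 < n) (v w : Fin n → ℝ) (hw : w ≠ 0)
    (hww : mink w w ≤ 0) (hvw : mink v w = 0) :
    0 ≤ mink v v ∧ (mink v v = 0 → ∃ c : ℝ, v = c • w) := by
  have hw0 : w ⟨0, hn⟩ ≠ 0 := fun h =>
    hw ((mink_spatial hn w h).2 (le_antisymm hww (mink_spatial hn w h).1))
  -- Subtracting a multiple of `w` from `v` kills the time coordinate.
  set c := v ⟨0, hn⟩ / w ⟨0, hn⟩ with hc
  have hz := mink_spatial hn (v - c • w) (by simp [hc, hw0])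
  have e : mink (v - c • w) (v - c • w) = mink v v + c ^ 2 * mink w w := by
    simp only [mink_sub_left, mink_sub_right, mink_smul_left, mink_smul_right,
      mink_comm w v, hvw]
    ring
  rw [e] at hz
  have h1 : c ^ 2 * mink w w ≤ 0 := mul_nonpos_of_nonneg_of_nonpos (sq_nonneg c) hww
  refine ⟨by linarith [hz.1], fun hv => ⟨c, sub_eq_zero.1 (hz.2 ?_)⟩⟩
  linarith [hz.1]

/-- Vectors of equal square with equal product against a timelike vector `u` are at bounded
distance: with `y` in place of `R^q x`, this bounds the elliptic part of the displacement. -/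
theorem mink_sub_bound {n : ℕ} (hn : 0 < n) (x y u : Fin n → ℝ) (hu : mink u u < 0)
    (hyy : mink y y = mink x x) (hyu : mink y u = mink x u) :
    mink (y - x) (y - x) ≤ 4 * mink x x - 4 * mink x u ^ 2 / mink u u := by
  have hu0 : u ≠ 0 := by
    rintro rfl
    simp [mink_zero_left] at hu
  have hne : mink u u ≠ 0 := hu.ne
  -- The component of `y + x` orthogonal to `u` has nonnegative square; then apply the
  -- parallelogram identity.
  have hb := (mink_orthogonal hn (y + x - (2 * mink x u / mink u u) • u) u hu0 hu.le (by
    simp only [mink_sub_left, mink_add_left, mink_smul_left, hyu]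
    field_simp
    ring)).1
  simp only [mink_sub_left, mink_sub_right, mink_add_left, mink_add_right, mink_smul_left,
    mink_smul_right, mink_comm u, hyy, hyu, mink_comm x y] at hb ⊢
  have e2 : 2 * mink x u / mink u u * mink u u = 2 * mink x u := by field_simp
  have e3 : 2 * mink x u / mink u u * mink x u = 2 * mink x u ^ 2 / mink u u := by ring
  have e4 : 4 * mink x u ^ 2 / mink u u = 2 * (2 * mink x u ^ 2 / mink u u) := by ring
  rw [e2] at hb
  rw [e4]
  have e5 : 2 * mink x u / mink u u * (2 * mink x u) = 2 * (2 * mink x u ^ 2 / mink u u) := by ring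
  nlinarith [hb, e3, e5]

/-- The adjoint relation `p* = -p (id + p)⁻¹`. -/
theorem mink_adj {n : ℕ} (p : (Fin n → ℝ) →ₗ[ℝ] (Fin n → ℝ))
    (hppres : ∀ x y : Fin n → ℝ, mink (x + p x) (y + p y) = mink x y) (x y : Fin n → ℝ) :
    mink (p x) y = -mink (x + p x) (p y) := by
  have := hppres x y
  rw [mink_add_right, mink_add_left x] at this
  linarith

/-- The images of `p^i` and `p^j` are orthogonal once `p^(i+j) = 0`: up to sign and the invertible
factor `id + p`, `p` can be moved from one side of the form to the other. -/
theorem mink_pow_pow {n : ℕ} (p : (Fin n → ℝ) →ₗ[ℝ] (Fin n → ℝ))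
    (hppres : ∀ x y : Fin n → ℝ, mink (x + p x) (y + p y) = mink x y) (N : ℕ) (hN : p ^ N = 0)
    (i : ℕ) : ∀ (j : ℕ) (x y : Fin n → ℝ), N ≤ i + j → mink ((p ^ i) x) ((p ^ j) y) = 0 := by
  induction i with
  | zero =>
    intro j x y h
    rw [pow_eq_zero_of_le (m := N) (n := j) (by omega) hN]
    exact mink_zero_right _
  | succ i ih =>
    intro j x y h
    rw [pow_succ', Module.End.mul_apply, mink_adj p hppres, ← Module.End.mul_apply p (p ^ j),
      ← pow_succ', ← Module.End.mul_apply p (p ^ i), ← pow_succ', pow_succ,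
      Module.End.mul_apply, ← map_add, ih (j + 1) _ _ (by omega), neg_zero]

/-- If `p³ ≠ 0`, the images of the last two nonzero powers of `p` would together span an isotropic
subspace of dimension at least two. -/
theorem cube_eq_zero {n : ℕ} (hn : 0 < n) (p : (Fin n → ℝ) →ₗ[ℝ] (Fin n → ℝ))
    (hnil : IsNilpotent p)
    (hppres : ∀ x y : Fin n → ℝ, mink (x + p x) (y + p y) = mink x y) (x : Fin n → ℝ) :
    p (p (p x)) = 0 := by
  have hN : p ^ nilpotencyClass p = 0 := pow_nilpotencyClass hnil
  have hmin : ∀ m, m < nilpotencyClass p → p ^ m ≠ 0 := fun m hm h =>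
    absurd (Nat.sInf_le (s := {k | p ^ k = 0}) h) (not_le.2 hm)
  generalize nilpotencyClass p = N at hN hmin
  have h3 : N ≤ 3 := by
    by_contra! hlt
    obtain ⟨k, rfl⟩ : ∃ k, N = k + 2 := ⟨N - 2, by omega⟩
    have hpz : ∃ z, (p ^ (k + 1)) z ≠ 0 := by
      by_contra! h
      exact hmin (k + 1) (by omega) (LinearMap.ext h)
    obtain ⟨z, hz⟩ := hpz
    have hiso := mink_pow_pow p hppres (k + 2) hN
    -- `p^k z` and `p^(k+1) z` span an isotropic subspace, hence are proportional.
    obtain ⟨c, hc⟩ := (mink_orthogonal hn ((p ^ k) z) ((p ^ (k + 1)) z) hz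
      (hiso _ _ _ _ (by omega)).le (hiso _ _ _ _ (by omega))).2 (hiso _ _ _ _ (by omega))
    apply hz
    rw [pow_succ', Module.End.mul_apply, hc, map_smul, ← Module.End.mul_apply, ← pow_succ', hN]
    simp
  have := LinearMap.congr_fun (pow_eq_zero_of_le h3 hN) x
  simpa [pow_succ] using this

/-- The square of the unipotent part of the displacement, together with `|p A|² > 0`. -/
theorem mink_orbit_part {n : ℕ} (hn : 0 < n) (p : (Fin n → ℝ) →ₗ[ℝ] (Fin n → ℝ))
    (hppres : ∀ x y : Fin n → ℝ, mink (x + p x) (y + p y) = mink x y)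
    (hcube : ∀ x, p (p (p x)) = 0) (A : Fin n → ℝ) (hA : p (p A) ≠ 0) :
    0 < mink (p A) (p A) ∧ ∀ q : ℝ,
      mink (q • A + (q * (q - 1) / 2) • p A + (q * (q - 1) * (q - 2) / 6) • p (p A))
        (q • A + (q * (q - 1) / 2) • p A + (q * (q - 1) * (q - 2) / 6) • p (p A))
      = q ^ 2 * (mink A A - (q ^ 2 - 1) * mink (p A) (p A) / 12) := by
  have adj := mink_adj p hppres
  have h22 : mink (p (p A)) (p (p A)) = 0 := by
    rw [adj, hcube, mink_zero_right, neg_zero]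
  have h12 : mink (p A) (p (p A)) = 0 := by
    rw [adj, hcube, mink_zero_right, neg_zero]
  have h02 : mink A (p (p A)) = -mink (p A) (p A) := by
    have := adj A (p A)
    rw [mink_add_left, h12] at this
    linarith
  have h01 : mink A (p A) = -mink (p A) (p A) / 2 := by
    have := adj A A
    rw [mink_add_left, mink_comm (p A) A] at this
    linarith
  have h1 := mink_orthogonal hn (p A) (p (p A)) hA h22.le h12
  constructor
  · refine lt_of_le_of_ne h1.1 fun h => ?_
    obtain ⟨c, hc⟩ := h1.2 h.symm
    apply hA
    rw [hc, map_smul, hcube, smul_zero]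
  · intro q
    simp only [mink_add_left, mink_add_right, mink_smul_left, mink_smul_right,
      mink_comm (p A) A, mink_comm (p (p A)) A, mink_comm (p (p A)) (p A), h22, h12, h02, h01]
    ring

/-- The forward orbit of `x`; the vector `y` stands for `R^q x`. -/
theorem orbit_formula {n : ℕ} (p : (Fin n → ℝ) →ₗ[ℝ] (Fin n → ℝ))
    (hcube : ∀ x, p (p (p x)) = 0)
    (R : (Fin n → ℝ) ≃ₗ[ℝ] (Fin n → ℝ))
    (hR : ∀ x y : Fin n → ℝ, mink (R x) (R y) = mink x y)
    (hRp : ∀ x : Fin n → ℝ, R (p x) = p x) (hpR : ∀ x : Fin n → ℝ, p (R x) = p x)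
    (τ : Fin n → ℝ) (hτ : R τ = τ)
    (g : (Fin n → ℝ) ≃ᵃ[ℝ] (Fin n → ℝ))
    (hg : ∀ x : Fin n → ℝ, g x = R (x + p x) + τ) (x : Fin n → ℝ) (q : ℕ) :
    ∃ y : Fin n → ℝ, p y = p x ∧ mink y y = mink x x ∧
      (∀ s, R s = s → mink y s = mink x s) ∧
      (g ^ q) x = y + ((q : ℝ) • (p x + τ) + ((q : ℝ) * (q - 1) / 2) • p (p x + τ)
        + ((q : ℝ) * (q - 1) * (q - 2) / 6) • p (p (p x + τ))) := by
  induction q with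
  | zero => exact ⟨x, rfl, rfl, fun _ _ => rfl, by simp⟩
  | succ q ih =>
    obtain ⟨y, h1, h2, h3, h4⟩ := ih
    refine ⟨R y, by rw [hpR, h1], by rw [hR, h2], fun s hs => ?_, ?_⟩
    · rw [← h3 s hs]
      conv_lhs => rw [← hs]
      exact hR y s
    · rw [pow_succ', AffineEquiv.mul_def, AffineEquiv.trans_apply, h4, hg]
      simp only [map_add, map_smul, hRp, hτ, h1, hcube, map_zero]
      push_cast
      module

/-- the achronal domain of a *transverse* parabolic isometry
`g(x) = R((id + p)x) + τ` (with `p²(τ) ≠ 0`) is empty. -/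
theorem stmt9 {n : ℕ} (hn : 3 ≤ n)
    (p : (Fin n → ℝ) →ₗ[ℝ] (Fin n → ℝ)) (hnil : IsNilpotent p) (hp : p ≠ 0)
    (hppres : ∀ x y : Fin n → ℝ, mink (x + p x) (y + p y) = mink x y)
    (R : (Fin n → ℝ) ≃ₗ[ℝ] (Fin n → ℝ))
    (hR : ∀ x y : Fin n → ℝ, mink (R x) (R y) = mink x y)
    (hfix : ∃ u : Fin n → ℝ, mink u u < 0 ∧ R u = u)
    (hRp : ∀ x : Fin n → ℝ, R (p x) = p x) (hpR : ∀ x : Fin n → ℝ, p (R x) = p x)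
    (τ : Fin n → ℝ) (hτ : R τ = τ) (htrans : p (p τ) ≠ 0)
    (g : (Fin n → ℝ) ≃ᵃ[ℝ] (Fin n → ℝ))
    (hg : ∀ x : Fin n → ℝ, g x = R (x + p x) + τ) :
    achronalDom g = ∅ := by
  have hn0 : 0 < n := by omega
  have hcube := cube_eq_zero hn0 p hnil hppres
  obtain ⟨u, hu, hRu⟩ := hfix
  rw [Set.eq_empty_iff_forall_notMem]
  intro x hx
  obtain ⟨hβ, hS⟩ := mink_orbit_part hn0 p hppres hcube (p x + τ) (by
    rw [map_add, map_add, hcube, zero_add]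
    exact htrans)
  set A := p x + τ with hA
  set β := mink (p A) (p A)
  set α := mink A A
  set M := 4 * mink x x - 4 * mink x u ^ 2 / mink u u with hM
  obtain ⟨m, hm⟩ := exists_nat_gt (12 * (α + |M|) / β)
  rw [div_lt_iff₀ hβ] at hm
  obtain ⟨y, -, hyy, hys, hgq⟩ := orbit_formula p hcube R hR hRp hpR τ hτ g hg x (m + 1)
  have hpos := hx ((m + 1 : ℕ) : ℤ) (by positivity)
  rw [zpow_natCast, hgq, ← hA] at hpos
  set q : ℝ := ((m + 1 : ℕ) : ℝ) with hq
  have hSq := hS q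
  have hRS : R (q • A + (q * (q - 1) / 2) • p A + (q * (q - 1) * (q - 2) / 6) • p (p A))
      = q • A + (q * (q - 1) / 2) • p A + (q * (q - 1) * (q - 2) / 6) • p (p A) := by
    simp only [map_add, map_smul, hRp, hA, hτ]
  set S := q • A + (q * (q - 1) / 2) • p A + (q * (q - 1) * (q - 2) / 6) • p (p A)
  -- The elliptic part `y - x` is orthogonal to `S`, because `R` fixes `S`.
  have horth : mink (y - x) S = 0 := by
    rw [mink_sub_left, hys S hRS, sub_self]
  have hbd := mink_sub_bound hn0 x y u hu hyy (hys u hRu)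
  rw [← hM] at hbd
  rw [show y + S - x = (y - x) + S by abel, mink_add_left, mink_add_right _ S,
    mink_add_right _ S S, mink_comm S (y - x), horth, hSq] at hpos
  have hm0 : (0 : ℝ) ≤ m := m.cast_nonneg
  have hqm : q = m + 1 := by rw [hq]; push_cast; ring
  have hq1 : 1 ≤ q ^ 2 := by nlinarith
  have hbr : α - (q ^ 2 - 1) * β / 12 < -|M| := by
    have : (m : ℝ) * β ≤ (q ^ 2 - 1) * β := by
      apply mul_le_mul_of_nonneg_right _ hβ.le
      nlinarith
    linarith
  nlinarith [le_abs_self M, abs_nonneg M, mul_le_mul_of_nonneg_right hq1 (abs_nonneg M),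
    mul_lt_mul_of_pos_left hbr (lt_of_lt_of_le one_pos hq1)]
end
end
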